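/- arXiv:2307.08400 — 5 statements merged into one kernel-verified Lean document; each statement's English description precedes it below -/
import Mathlib

section
/- Let G be a finitely generated group acting by isometries on each of finitely many δ-hyperbolic geodesic metric spaces X₁, …, X_l, such that the diagonal action on the product X with the ℓ¹-metric is metrically proper and has D-coarsely dense orbits. Then there exists a constant C₁ = C₁(D, δ, l) > 0 such that for any M > 0 and any finite subset S ⊆ G, at least one of the following holds: (1) there exists 1 ≤ i ≤ l with λ(S, X_i) > M; (2) for every o ∈ X one has λ(S, G·o) ≤ C₁(M + 1), where λ(S, G·o) = inf_{g∈G} max_{s∈S} d(g·o, s g·o). -/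
open Pointwise

/-- A geodesic from `a` to `b`, parametrized by arc length on `[0, dist a b]`. -/
def IsGeodesicSeg {X : Type*} [MetricSpace X] (γ : ℝ → X) (a b : X) : Prop :=
  γ 0 = a ∧ γ (dist a b) = b ∧
    ∀ s ∈ Set.Icc (0 : ℝ) (dist a b), ∀ t ∈ Set.Icc (0 : ℝ) (dist a b),
      dist (γ s) (γ t) = |s - t|

/-- A geodesic metric space: any two points are joined by a geodesic segment. -/
def GeodesicMetricSpace (X : Type*) [MetricSpace X] : Prop :=
  ∀ a b : X, ∃ γ : ℝ → X, IsGeodesicSeg γ a b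

/-- `δ`-hyperbolicity via thin triangles: every side of a geodesic triangle is in the
`δ`-neighbourhood of the union of the other two sides. -/
def DeltaHyperbolic (X : Type*) [MetricSpace X] (δ : ℝ) : Prop :=
  ∀ a b c : X, ∀ γ₁ γ₂ γ₃ : ℝ → X,
    IsGeodesicSeg γ₁ a b → IsGeodesicSeg γ₂ b c → IsGeodesicSeg γ₃ c a →
    ∀ t ∈ Set.Icc (0 : ℝ) (dist a b),
      (∃ u ∈ Set.Icc (0 : ℝ) (dist b c), dist (γ₁ t) (γ₂ u) ≤ δ) ∨
      (∃ u ∈ Set.Icc (0 : ℝ) (dist c a), dist (γ₁ t) (γ₃ u) ≤ δ)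

/-- The `ℓ¹`-metric on a finite product of metric spaces. -/
noncomputable def dL1 {l : ℕ} {X : Fin l → Type*} [∀ i, MetricSpace (X i)]
    (x y : ∀ i, X i) : ℝ :=
  ∑ i, dist (x i) (y i)

/-- Displacement `λ(S,x) = max_{s ∈ S} d(x, s·x)` of a finite set of group elements
at a point of a `G`-space. -/
noncomputable def dispAt (G : Type*) [Group G] (X : Type*) [MetricSpace X] [MulAction G X]
    (S : Finset G) (x : X) : ℝ :=
  sSup ((fun s : G => dist x (s • x)) '' (S : Set G))

/-- Displacement `λ(S,X) = inf_{x ∈ X} λ(S,x)` of a finite set of group elements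
on a `G`-space. -/
noncomputable def dispSpace (G : Type*) [Group G] (X : Type*) [MetricSpace X] [MulAction G X]
    (S : Finset G) : ℝ :=
  sInf (Set.range fun x : X => dispAt G X S x)

/-- Displacement `λ(S,x) = max_{s ∈ S} d(x, s·x)` at a point of the `ℓ¹`-product. -/
noncomputable def dispAtProd (G : Type*) [Group G] {l : ℕ} (X : Fin l → Type*)
    [∀ i, MetricSpace (X i)] [∀ i, MulAction G (X i)] (S : Finset G) (x : ∀ i, X i) : ℝ :=
  sSup ((fun s : G => dL1 x (fun i => s • x i)) '' (S : Set G))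

/-- Displacement `λ(S,X)` on the whole `ℓ¹`-product `X = X₁ × ⋯ × X_l`. -/
noncomputable def dispProd (G : Type*) [Group G] {l : ℕ} (X : Fin l → Type*)
    [∀ i, MetricSpace (X i)] [∀ i, MulAction G (X i)] (S : Finset G) : ℝ :=
  sInf (Set.range fun x : ∀ i, X i => dispAtProd G X S x)

/-- Displacement `λ(S, G·o) = inf_{g ∈ G} max_{s ∈ S} d(g·o, s·g·o)` on the orbit `G·o`
in the `ℓ¹`-product. -/
noncomputable def dispOrbit (G : Type*) [Group G] {l : ℕ} (X : Fin l → Type*)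
    [∀ i, MetricSpace (X i)] [∀ i, MulAction G (X i)] (S : Finset G) (o : ∀ i, X i) : ℝ :=
  sInf (Set.range fun g : G => dispAtProd G X S (fun i => g • o i))

/-- A finitely generated group `G` acting by isometries on each of `l` many `δ`-hyperbolic
geodesic metric spaces, such that the diagonal action on the `ℓ¹`-product is metrically
proper and has `D`-coarsely dense orbits. -/
structure ProperProductAction (D δ : ℝ) (l : ℕ) (G : Type*) [Group G]
    (X : Fin l → Type*) [∀ i, MetricSpace (X i)] [∀ i, MulAction G (X i)] : Prop where
  fg : Group.FG G
  geodesic : ∀ i, GeodesicMetricSpace (X i)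
  hyperbolic : ∀ i, DeltaHyperbolic (X i) δ
  isom : ∀ (i : Fin l) (g : G) (x y : X i), dist (g • x) (g • y) = dist x y
  proper : ∀ K : Set (∀ i, X i),
    (∃ C : ℝ, ∀ x ∈ K, ∀ y ∈ K, dL1 x y ≤ C) →
    {g : G | ∃ x ∈ K, (fun i => g • x i) ∈ K}.Finite
  denseOrbit : ∃ o : ∀ i, X i, ∀ x : ∀ i, X i, ∃ g : G, dL1 x (fun i => g • o i) ≤ D

/-- There is a constant `C₁ = C₁(D, δ, l) > 0` such that for any `M > 0`
and any finite nonempty subset `S` of a group `G` with a metrically proper diagonal action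
by isometries on an `ℓ¹`-product of `l` many `δ`-hyperbolic geodesic spaces with
`D`-coarsely dense orbits, either `λ(S, X_i) > M` on some factor `X_i`, or
`λ(S, G·o) ≤ C₁(M + 1)` for every `o ∈ X`. -/
theorem statement2 (D δ : ℝ) (hD : 0 < D) (hδ : 0 ≤ δ) (l : ℕ) (hl : 1 ≤ l) :
    ∃ C₁ : ℝ, 0 < C₁ ∧
      ∀ (G : Type) [Group G] (X : Fin l → Type)
        [∀ i, MetricSpace (X i)] [∀ i, MulAction G (X i)],
        ProperProductAction D δ l G X →
        ∀ M : ℝ, 0 < M → ∀ S : Finset G, S.Nonempty →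
          (∃ i : Fin l, M < dispSpace G (X i) S) ∨
          (∀ o : ∀ i, X i, dispOrbit G X S o ≤ C₁ * (M + 1)) := by
  refine ⟨l + 4 * D, by positivity, ?_⟩
  intro G _ X _ _ h M hM S hS
  by_cases hc : ∃ i : Fin l, M < dispSpace G (X i) S
  · exact Or.inl hc
  right
  intro o
  push Not at hc
  obtain ⟨o', ho'⟩ := h.denseOrbit
  have key : ∀ i, ∃ x : X i, ∀ s ∈ S, dist x (s • x) ≤ M + 1 := by
    intro i
    have hne : (Set.range fun x : X i => dispAt G (X i) S x).Nonempty := ⟨_, o i, rfl⟩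
    have hlt : sInf (Set.range fun x : X i => dispAt G (X i) S x) < M + 1 := by
      have := hc i
      unfold dispSpace at this
      linarith
    obtain ⟨_, ⟨x, rfl⟩, hx⟩ := exists_lt_of_csInf_lt hne hlt
    refine ⟨x, fun s hs => le_trans ?_ hx.le⟩
    exact le_csSup ((S.finite_toSet.image _).bddAbove) ⟨s, hs, rfl⟩
  choose x hx using key
  obtain ⟨g, hg⟩ := ho' x
  obtain ⟨k, hk⟩ := ho' o
  have hdist : ∑ i, dist (x i) ((g * k⁻¹) • o i) ≤ 2 * D := by
    have h1 : ∀ i, dist (x i) ((g * k⁻¹) • o i) ≤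
        dist (x i) (g • o' i) + dist (o i) (k • o' i) := by
      intro i
      have h2 := dist_triangle (x i) (g • o' i) ((g * k⁻¹) • o i)
      have h3 := h.isom i (g * k⁻¹) (k • o' i) (o i)
      rw [smul_smul, inv_mul_cancel_right, dist_comm (k • o' i)] at h3
      linarith
    calc _ ≤ ∑ i, (dist (x i) (g • o' i) + dist (o i) (k • o' i)) :=
          Finset.sum_le_sum fun i _ => h1 i
      _ ≤ 2 * D := by
          rw [Finset.sum_add_distrib]
          unfold dL1 at hg hk
          linarith
  have hbdd : BddBelow (Set.range fun g : G => dispAtProd G X S (fun i => g • o i)) := by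
    refine ⟨0, ?_⟩
    rintro _ ⟨a, rfl⟩
    apply Real.sSup_nonneg
    rintro _ ⟨s, _, rfl⟩
    exact Finset.sum_nonneg fun i _ => dist_nonneg
  refine (csInf_le hbdd ⟨g * k⁻¹, rfl⟩).trans ?_
  apply csSup_le (hS.to_set.image _)
  rintro _ ⟨s, hs, rfl⟩
  have h4 : ∀ i, dist ((g * k⁻¹) • o i) (s • (g * k⁻¹) • o i) ≤
      (M + 1) + 2 * dist (x i) ((g * k⁻¹) • o i) := by
    intro i
    have h5 := dist_triangle4 ((g * k⁻¹) • o i) (x i) (s • x i) (s • (g * k⁻¹) • o i)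
    rw [h.isom, dist_comm _ (x i)] at h5
    have := hx i s hs
    linarith
  calc _ ≤ ∑ i : Fin l, ((M + 1) + 2 * dist (x i) ((g * k⁻¹) • o i)) :=
        Finset.sum_le_sum fun i _ => h4 i
    _ ≤ l * (M + 1) + 4 * D := by
        rw [Finset.sum_add_distrib, ← Finset.mul_sum]
        simp only [Finset.sum_const, Finset.card_univ, Fintype.card_fin, nsmul_eq_mul]
        linarith
    _ ≤ _ := by nlinarith
end

section
/- Let G be a finitely generated group acting by isometries on each of finitely many δ-hyperbolic geodesic metric spaces X₁, …, X_l, such that the diagonal action on the product X with the ℓ¹-metric is metrically proper and has D-coarsely dense orbits. Then there is a constant C₁ = C₁(D, δ, l) > 0 such that for any finite subset S ⊆ G and any point o ∈ X one has λ(S, X) ≤ λ(S, G·o) ≤ C₁·λ(S, X) + C₁, where λ(S, G·o) = inf_{g∈G} max_{s∈S} d(g·o, s g·o). -/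
open Pointwise

lemma dL1_triangle {l : ℕ} {X : Fin l → Type*} [∀ i, MetricSpace (X i)]
    (x y z : ∀ i, X i) : dL1 x z ≤ dL1 x y + dL1 y z := by
  unfold dL1
  rw [← Finset.sum_add_distrib]
  exact Finset.sum_le_sum fun i _ => dist_triangle _ _ _

lemma dL1_symm {l : ℕ} {X : Fin l → Type*} [∀ i, MetricSpace (X i)]
    (x y : ∀ i, X i) : dL1 x y = dL1 y x := by
  unfold dL1
  exact Finset.sum_congr rfl fun i _ => dist_comm _ _

lemma dL1_pos {l : ℕ} {X : Fin l → Type*} [∀ i, MetricSpace (X i)]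
    (x y : ∀ i, X i) : 0 ≤ dL1 x y := by
  unfold dL1
  exact Finset.sum_nonneg fun i _ => dist_nonneg

lemma dispAtProd_nonneg' (G : Type*) [Group G] {l : ℕ} (X : Fin l → Type*)
    [∀ i, MetricSpace (X i)] [∀ i, MulAction G (X i)] (S : Finset G) (x : ∀ i, X i) :
    0 ≤ dispAtProd G X S x := by
  apply Real.sSup_nonneg
  rintro _ ⟨s, _, rfl⟩
  exact dL1_pos _ _

lemma dispAtProd_bdd (G : Type*) [Group G] {l : ℕ} (X : Fin l → Type*)
    [∀ i, MetricSpace (X i)] [∀ i, MulAction G (X i)] (S : Finset G) :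
    BddBelow (Set.range fun x : ∀ i, X i => dispAtProd G X S x) := by
  refine ⟨0, ?_⟩
  rintro _ ⟨x, rfl⟩
  exact dispAtProd_nonneg' G X S x

lemma dispOrbit_bdd (G : Type*) [Group G] {l : ℕ} (X : Fin l → Type*)
    [∀ i, MetricSpace (X i)] [∀ i, MulAction G (X i)] (S : Finset G) (o : ∀ i, X i) :
    BddBelow (Set.range fun g : G => dispAtProd G X S (fun i => g • o i)) := by
  refine ⟨0, ?_⟩
  rintro _ ⟨x, rfl⟩
  exact dispAtProd_nonneg' G X S _



/-- There is a constant `C₁ = C₁(D, δ, l) > 0` such that for any finite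
nonempty subset `S` of a group `G` with a metrically proper diagonal action by isometries
on an `ℓ¹`-product of `l` many `δ`-hyperbolic geodesic spaces with `D`-coarsely dense
orbits, and any point `o` of the product, one has
`λ(S, X) ≤ λ(S, G·o) ≤ C₁·λ(S, X) + C₁`. -/
theorem statement3 (D δ : ℝ) (hD : 0 < D) (hδ : 0 ≤ δ) (l : ℕ) (hl : 1 ≤ l) :
    ∃ C₁ : ℝ, 0 < C₁ ∧
      ∀ (G : Type) [Group G] (X : Fin l → Type)
        [∀ i, MetricSpace (X i)] [∀ i, MulAction G (X i)],
        ProperProductAction D δ l G X →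
        ∀ S : Finset G, S.Nonempty → ∀ o : ∀ i, X i,
          dispProd G X S ≤ dispOrbit G X S o ∧
          dispOrbit G X S o ≤ C₁ * dispProd G X S + C₁ := by
  refine ⟨1 + 4 * D, by linarith, ?_⟩
  intro G _ X _ _ h S hS o
  have isoL : ∀ (g : G) (x y : ∀ i, X i),
      dL1 (fun i => g • x i) (fun i => g • y i) = dL1 x y := by
    intro g x y
    unfold dL1
    exact Finset.sum_congr rfl fun i _ => h.isom i g _ _
  constructor
  · unfold dispOrbit
    apply le_csInf (Set.range_nonempty _)
    rintro _ ⟨g, rfl⟩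
    exact csInf_le (dispAtProd_bdd G X S) ⟨_, rfl⟩
  · have key : dispOrbit G X S o - 4 * D ≤ dispProd G X S := by
      unfold dispProd
      refine le_csInf ⟨_, Set.mem_range_self o⟩ ?_
      rintro _ ⟨x, rfl⟩
      obtain ⟨p, hp⟩ := h.denseOrbit
      obtain ⟨a, ha⟩ := hp x
      obtain ⟨b, hb⟩ := hp o
      have hx : dL1 x (fun i => (a * b⁻¹) • o i) ≤ 2 * D := by
        have h1 := dL1_triangle x (fun i => a • p i) (fun i => (a * b⁻¹) • o i)
        have h2 := isoL (a * b⁻¹) o (fun i => b • p i)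
        simp only [smul_smul, inv_mul_cancel_right] at h2
        rw [dL1_symm] at h2
        linarith
      have h3 : dispOrbit G X S o ≤ dispAtProd G X S (fun i => (a * b⁻¹) • o i) :=
        csInf_le (dispOrbit_bdd G X S o) ⟨_, rfl⟩
      have h4 : dispAtProd G X S (fun i => (a * b⁻¹) • o i) ≤ dispAtProd G X S x + 4 * D := by
        generalize (fun i => (a * b⁻¹) • o i) = y at hx
        apply csSup_le ((Finset.coe_nonempty.2 hS).image _)
        rintro _ ⟨s, hs, rfl⟩
        have h5 : dL1 x (fun i => s • x i) ≤ dispAtProd G X S x :=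
          le_csSup ((S.finite_toSet.image _).bddAbove) ⟨s, hs, rfl⟩
        have h6 := dL1_triangle y x (fun i => s • y i)
        have h7 := dL1_triangle x (fun i => s • x i) (fun i => s • y i)
        have h8 := isoL s x y
        have h9 := dL1_symm x y
        show dL1 y (fun i => s • y i) ≤ _
        linarith
      show _ ≤ dispAtProd G X S x
      linarith
    have hn : 0 ≤ dispProd G X S := by
      apply Real.sInf_nonneg
      rintro _ ⟨x, rfl⟩
      exact dispAtProd_nonneg' G X S x
    nlinarith [mul_nonneg hD.le hn]
end

section
/- Let X be a δ-hyperbolic geodesic metric space and let S be a finite nonempty set of isometries of X. Fix two points x, o ∈ X. Then there exist s ∈ S, a geodesic segment from o to s·o, and a point z on this segment, such that λ(S, z) ≤ 6·λ(S, x) + 24δ. -/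
open Pointwise

/-- Displacement `λ(S,x) = max_{s ∈ S} d(x, s·x)` of a finite set of isometries at `x`. -/
noncomputable def idispAt {X : Type*} [MetricSpace X] (S : Finset (X ≃ᵢ X)) (x : X) : ℝ :=
  sSup ((fun s : X ≃ᵢ X => dist x (s x)) '' (S : Set (X ≃ᵢ X)))

/-- Displacement `λ(S,X) = inf_{x ∈ X} λ(S,x)` of a finite set of isometries on `X`. -/
noncomputable def idispSpace {X : Type*} [MetricSpace X] (S : Finset (X ≃ᵢ X)) : ℝ :=
  sInf (Set.range fun x : X => idispAt S x)

theorem IsGeodesicSeg.left {X : Type*} [MetricSpace X] {γ : ℝ → X} {a b : X}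
    (h : IsGeodesicSeg γ a b) {u : ℝ} (hu : u ∈ Set.Icc (0 : ℝ) (dist a b)) :
    dist a (γ u) = u := by
  have := h.2.2 0 ⟨le_rfl, dist_nonneg⟩ u hu
  rw [h.1] at this
  rw [this, zero_sub, abs_neg, abs_of_nonneg hu.1]

theorem IsGeodesicSeg.right {X : Type*} [MetricSpace X] {γ : ℝ → X} {a b : X}
    (h : IsGeodesicSeg γ a b) {u : ℝ} (hu : u ∈ Set.Icc (0 : ℝ) (dist a b)) :
    dist (γ u) b = dist a b - u := by
  have := h.2.2 u hu (dist a b) ⟨dist_nonneg, le_rfl⟩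
  rw [h.2.1] at this
  rw [this, abs_sub_comm, abs_of_nonneg (by linarith [hu.2])]

theorem IsGeodesicSeg.rev {X : Type*} [MetricSpace X] {γ : ℝ → X} {a b : X}
    (h : IsGeodesicSeg γ a b) : IsGeodesicSeg (fun t => γ (dist a b - t)) b a := by
  refine ⟨by simp [h.2.1], by simp [dist_comm b a, h.1], ?_⟩
  intro s hs t ht
  rw [dist_comm b a] at hs ht
  have := h.2.2 (dist a b - s) ⟨by linarith [hs.2], by linarith [hs.1]⟩
    (dist a b - t) ⟨by linarith [ht.2], by linarith [ht.1]⟩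
  simp only [this]
  rw [abs_sub_comm]
  congr 1
  ring

theorem IsGeodesicSeg.map {X : Type*} [MetricSpace X] {γ : ℝ → X} {a b : X}
    (h : IsGeodesicSeg γ a b) (s : X ≃ᵢ X) : IsGeodesicSeg (fun t => s (γ t)) (s a) (s b) := by
  refine ⟨by simp [h.1], by simp [s.dist_eq, h.2.1], ?_⟩
  intro u hu t ht
  rw [s.dist_eq] at hu ht
  simp only [s.dist_eq]
  exact h.2.2 u hu t ht

theorem quad_thin {X : Type*} [MetricSpace X] {δ : ℝ} (hgeo : GeodesicMetricSpace X)
    (hhyp : DeltaHyperbolic X δ) {a b e f : X} {γ₁ γ₂ γ₃ γ₄ : ℝ → X}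
    (h₁ : IsGeodesicSeg γ₁ a b) (h₂ : IsGeodesicSeg γ₂ b e) (h₃ : IsGeodesicSeg γ₃ e f)
    (h₄ : IsGeodesicSeg γ₄ f a) {t : ℝ} (ht : t ∈ Set.Icc (0 : ℝ) (dist a b)) :
    (∃ u ∈ Set.Icc (0 : ℝ) (dist b e), dist (γ₁ t) (γ₂ u) ≤ 2 * δ) ∨
    (∃ u ∈ Set.Icc (0 : ℝ) (dist e f), dist (γ₁ t) (γ₃ u) ≤ 2 * δ) ∨
    (∃ u ∈ Set.Icc (0 : ℝ) (dist f a), dist (γ₁ t) (γ₄ u) ≤ δ) := by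
  obtain ⟨η, hη⟩ := hgeo b f
  rcases hhyp a b f γ₁ η γ₄ h₁ hη h₄ t ht with ⟨u, hu, h⟩ | h
  · rcases hhyp b f e η _ _ hη h₃.rev h₂.rev u hu with ⟨v, hv, h'⟩ | ⟨v, hv, h'⟩
    · right; left
      rw [dist_comm f e] at hv
      exact ⟨dist e f - v, ⟨by linarith [hv.2], by linarith [hv.1]⟩,
        by linarith [dist_triangle (γ₁ t) (η u) (γ₃ (dist e f - v))]⟩
    · left
      rw [dist_comm e b] at hv
      exact ⟨dist b e - v, ⟨by linarith [hv.2], by linarith [hv.1]⟩,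
        by linarith [dist_triangle (γ₁ t) (η u) (γ₂ (dist b e - v))]⟩
  · exact Or.inr (Or.inr h)

theorem le_idispAt {X : Type*} [MetricSpace X] {S : Finset (X ≃ᵢ X)} {s : X ≃ᵢ X} (hs : s ∈ S)
    (x : X) : dist x (s x) ≤ idispAt S x :=
  le_csSup (S.finite_toSet.image _).bddAbove ⟨s, hs, rfl⟩

theorem idispAt_le {X : Type*} [MetricSpace X] {S : Finset (X ≃ᵢ X)} (hS : S.Nonempty)
    {x : X} {M : ℝ} (h : ∀ s ∈ S, dist x (s x) ≤ M) : idispAt S x ≤ M := by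
  refine csSup_le (hS.to_set.image _) ?_
  rintro _ ⟨s, hs, rfl⟩
  exact h s hs

theorem disp_point {X : Type*} [MetricSpace X] {δ : ℝ} (hδ : 0 ≤ δ) (hgeo : GeodesicMetricSpace X)
    (hhyp : DeltaHyperbolic X δ) (s : X ≃ᵢ X) {x o : X} {c : ℝ → X} (hc : IsGeodesicSeg c o x)
    {t : ℝ} (ht : t ∈ Set.Icc (0 : ℝ) (dist o x)) (hl : dist o (s o) ≤ 2 * t) :
    dist (c t) (s (c t)) ≤ dist x (s x) + 4 * δ := by
  have hsc := hc.map s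
  have hD : dist (s o) (s x) = dist o x := s.dist_eq _ _
  have ht' : t ∈ Set.Icc (0 : ℝ) (dist (s o) (s x)) := by rwa [hD]
  obtain ⟨γ₂, h₂⟩ := hgeo x (s x)
  obtain ⟨γ₄, h₄⟩ := hgeo (s o) o
  have e1 := hc.left ht
  have e2 := hc.right ht
  have e3 := hsc.left ht'
  have e4 := hsc.right ht'
  beta_reduce at e3 e4
  rcases quad_thin hgeo hhyp hc h₂ hsc.rev h₄ ht with ⟨u, hu, h⟩ | ⟨u, hu, h⟩ | ⟨u, hu, h⟩
  · have f1 := h₂.left hu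
    have f2 := h₂.right hu
    have g1 := dist_triangle (c t) (γ₂ u) x
    have g2 := dist_triangle (c t) (γ₂ u) (s x)
    have g3 := dist_triangle (c t) (s x) (s (c t))
    rw [dist_comm (γ₂ u) x] at g1
    rw [dist_comm (s x) (s (c t))] at g3
    linarith
  · rw [dist_comm (s x) (s o)] at hu
    have hv : dist (s o) (s x) - u ∈ Set.Icc (0 : ℝ) (dist (s o) (s x)) :=
      ⟨by linarith [hu.2], by linarith [hu.1]⟩
    beta_reduce at h
    generalize dist (s o) (s x) - u = v at h hv
    have f2 := hsc.right hv
    have f3 := hsc.2.2 v hv t ht'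
    beta_reduce at f2 f3
    have g1 := dist_triangle4 (c t) (s (c v)) (s x) x
    have g2 := dist_triangle4 (s (c v)) (c t) x (s x)
    have g3 := dist_triangle (c t) (s (c v)) (s (c t))
    rw [dist_comm (s x) x] at g1
    rw [dist_comm (s (c v)) (c t)] at g2
    have : |v - t| ≤ dist x (s x) + 2 * δ := abs_le.2 ⟨by linarith, by linarith⟩
    linarith
  · have f1 := h₄.left hu
    have f2 := h₄.right hu
    rw [dist_comm (s o) o] at f2
    have g1 := dist_triangle o (γ₄ u) (c t)
    rw [dist_comm o (γ₄ u), dist_comm (γ₄ u) (c t)] at g1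
    have g2 := dist_triangle (s o) (γ₄ u) (c t)
    rw [dist_comm (γ₄ u) (c t)] at g2
    -- now `dist (s o) (c t) ≤ t + 2δ`
    have k1 : dist (s o) (c t) ≤ t + 2 * δ := by linarith
    have k2 := dist_triangle (c t) x (s x)
    obtain ⟨η, hη⟩ := hgeo (s x) (c t)
    obtain ⟨ζ, hζ⟩ := hgeo (c t) (s o)
    rcases hhyp _ _ _ _ η ζ hsc hη hζ t ht' with ⟨w, hw, h'⟩ | ⟨w, hw, h'⟩
    · have a1 := hη.left hw
      have a2 := hη.right hw
      beta_reduce at h'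
      rw [dist_comm (s x) (c t)] at a2
      have b1 := dist_triangle (s (c t)) (η w) (s x)
      rw [dist_comm (η w) (s x)] at b1
      have b2 := dist_triangle (s (c t)) (η w) (c t)
      rw [dist_comm (s (c t)) (c t)] at b2
      linarith
    · have a1 := hζ.left hw
      have a2 := hζ.right hw
      beta_reduce at h'
      rw [dist_comm (c t) (s o)] at a2
      have b1 := dist_triangle (s (c t)) (ζ w) (s o)
      rw [dist_comm (s (c t)) (s o)] at b1
      have b2 := dist_triangle (s (c t)) (ζ w) (c t)
      rw [dist_comm (s (c t)) (c t), dist_comm (ζ w) (c t)] at b2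
      linarith [dist_nonneg (x := x) (y := s x)]

/-- Let `X` be a `δ`-hyperbolic geodesic metric space and `S` a finite
nonempty set of isometries of `X`. For any two points `x, o ∈ X` there are `s ∈ S`, a
geodesic from `o` to `s·o`, and a point `z` on it with `λ(S, z) ≤ 6·λ(S, x) + 24δ`. -/
theorem statement5 (δ : ℝ) (hδ : 0 ≤ δ) (X : Type*) [MetricSpace X]
    (hgeo : GeodesicMetricSpace X) (hhyp : DeltaHyperbolic X δ)
    (S : Finset (X ≃ᵢ X)) (hS : S.Nonempty) (x o : X) :
    ∃ s ∈ S, ∃ γ : ℝ → X, IsGeodesicSeg γ o (s o) ∧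
      ∃ t ∈ Set.Icc (0 : ℝ) (dist o (s o)),
        idispAt S (γ t) ≤ 6 * idispAt S x + 24 * δ := by
  obtain ⟨s, hs, hmax⟩ := S.exists_max_image (fun s => dist o (s o)) hS
  obtain ⟨c, hc⟩ := hgeo o x
  obtain ⟨γ, hγ⟩ := hgeo o (s o)
  set L := idispAt S x with hL
  have hLs : ∀ s ∈ S, dist x (s x) ≤ L := fun s hs => le_idispAt hs x
  have hL0 : 0 ≤ L := dist_nonneg.trans (hLs s hs)
  have hm : dist o (s o) / 2 ∈ Set.Icc (0 : ℝ) (dist o (s o)) := by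
    have := dist_nonneg (x := o) (y := s o)
    constructor <;> linarith
  refine ⟨s, hs, γ, hγ, dist o (s o) / 2, hm, ?_⟩
  obtain ⟨t, ht, htm, hp, htD⟩ : ∃ t ∈ Set.Icc (0 : ℝ) (dist o x), t ≤ dist o (s o) / 2 ∧
      (∀ r ∈ S, dist (c t) (r (c t)) ≤ L + 4 * δ) ∧ (t = dist o (s o) / 2 ∨ t = dist o x) := by
    rcases le_total (dist o (s o) / 2) (dist o x) with h | h
    · refine ⟨dist o (s o) / 2, ⟨hm.1, h⟩, le_rfl, fun r hr => ?_, Or.inl rfl⟩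
      have := disp_point hδ hgeo hhyp r hc (t := dist o (s o) / 2) ⟨hm.1, h⟩
        (by linarith [hmax r hr])
      linarith [hLs r hr]
    · refine ⟨dist o x, ⟨dist_nonneg, le_rfl⟩, h, fun r hr => ?_, Or.inr rfl⟩
      rw [hc.2.1]
      linarith [hLs r hr]
  have key : ∀ u ∈ Set.Icc (0 : ℝ) (dist o x), ∀ ε, 0 ≤ ε → u ≤ dist o (s o) / 2 + ε →
      dist o (s o) / 2 ≤ u + ε → dist (c u) (c t) ≤ ε := by
    intro u hu ε hε h1 h2
    rw [hc.2.2 u hu t ht]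
    refine abs_le.2 ⟨by linarith, ?_⟩
    rcases htD with h | h
    · linarith
    · linarith [hu.2]
  have hsc := hc.map s
  have hD : dist (s o) (s x) = dist o x := s.dist_eq _ _
  have z1 := hγ.left hm
  have z2 := hγ.right hm
  have hz : dist (γ (dist o (s o) / 2)) (c t) ≤ 2 * L + 8 * δ := by
    obtain ⟨γ₃, h₃⟩ := hgeo (s x) x
    generalize hzz : dist o (s o) / 2 = m at *
    have hLL := hLs s hs
    rcases quad_thin hgeo hhyp hγ hsc h₃ hc.rev hm with ⟨u, hu, h⟩ | ⟨u, hu, h⟩ | ⟨u, hu, h⟩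
    · have f1 := hsc.left hu
      beta_reduce at h f1
      rw [hD] at hu
      have g1 := dist_triangle (s o) (γ m) (s (c u))
      rw [dist_comm (s o) (γ m)] at g1
      have g2 := dist_triangle (γ m) (s (c u)) (s o)
      rw [dist_comm (s (c u)) (s o)] at g2
      have := key u hu (2 * δ) (by linarith) (by linarith) (by linarith)
      rw [← s.dist_eq] at this
      have g3 := dist_triangle4 (γ m) (s (c u)) (s (c t)) (c t)
      rw [dist_comm (s (c t)) (c t)] at g3
      linarith [hp s hs]
    · have f1 := h₃.right hu
      rw [dist_comm (s x) x] at f1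
      have g1 := dist_triangle (γ m) (γ₃ u) x
      have g2 := dist_triangle o (γ m) x
      have g3 := dist_triangle (γ m) x (c t)
      rw [dist_comm x (c t), hc.right ht] at g3
      rcases htD with h' | h' <;> linarith [hu.1]
    · rw [dist_comm x o] at hu
      have hv : dist o x - u ∈ Set.Icc (0 : ℝ) (dist o x) :=
        ⟨by linarith [hu.2], by linarith [hu.1]⟩
      beta_reduce at h
      generalize dist o x - u = v at h hv
      have f1 := hc.left hv
      have g1 := dist_triangle o (γ m) (c v)
      have g2 := dist_triangle o (c v) (γ m)
      rw [dist_comm (c v) (γ m)] at g2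
      have := key v hv δ hδ (by linarith) (by linarith)
      linarith [dist_triangle (γ m) (c v) (c t)]
  refine idispAt_le hS fun r hr => ?_
  have g := dist_triangle4 (γ (dist o (s o) / 2)) (c t) (r (c t)) (r (γ (dist o (s o) / 2)))
  rw [r.dist_eq, dist_comm (c t) (γ _)] at g
  linarith [hp r hr]
end

section
/- Let G be a group generated as a semigroup by a finite set U (i.e. every element of G is a product of elements of U), and let H be a normal subgroup of G of index d. Then there exists a finite subset W ⊆ U^{≤ d²−d+1} such that W generates H as a group and |W| ≥ |U|/d. -/
open Pointwise

/-- `U` generates the group `G` as a semigroup: every element of `G` is a product of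
elements of `U` (no inverses allowed). -/
def SemigroupGenerates {G : Type*} [Group G] (U : Set G) : Prop :=
  ∀ g : G, ∃ n : ℕ, g ∈ U ^ n

/-- `U^{≤m} = ⋃_{i ≤ m} Uⁱ`: products of at most `m` elements of `U`. -/
def wordBall {G : Type*} [Group G] (U : Set G) (m : ℕ) : Set G :=
  {g : G | ∃ i ≤ m, g ∈ U ^ i}

lemma wb_mul {G : Type*} [Group G] {U : Set G} {m n : ℕ} {a b : G}
    (ha : a ∈ wordBall U m) (hb : b ∈ wordBall U n) : a * b ∈ wordBall U (m + n) := by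
  obtain ⟨i, hi, ha⟩ := ha
  obtain ⟨j, hj, hb⟩ := hb
  exact ⟨i + j, by omega, by rw [pow_add]; exact Set.mul_mem_mul ha hb⟩

lemma wb_pow {G : Type*} [Group G] {U : Set G} {m : ℕ} {a : G}
    (ha : a ∈ wordBall U m) (n : ℕ) : a ^ n ∈ wordBall U (m * n) := by
  induction n with
  | zero => exact ⟨0, by simp, by simp⟩
  | succ n ih => rw [pow_succ, Nat.mul_succ]; exact wb_mul ih ha

lemma wb_mono {G : Type*} [Group G] {U : Set G} {m n : ℕ} (h : m ≤ n) {a : G}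
    (ha : a ∈ wordBall U m) : a ∈ wordBall U n := by
  obtain ⟨i, hi, ha⟩ := ha
  exact ⟨i, by omega, ha⟩

lemma wb_one {G : Type*} [Group G] {U : Set G} {a : G}
    (ha : a ∈ U) : a ∈ wordBall U 1 := ⟨1, le_rfl, by simpa using ha⟩

lemma wb_id {G : Type*} [Group G] {U : Set G} (m : ℕ) : (1 : G) ∈ wordBall U m :=
  ⟨0, by omega, by simp⟩

lemma wb_finite {G : Type*} [Group G] (U : Finset G) (m : ℕ) :
    (wordBall (U : Set G) m).Finite := by
  have : wordBall (U : Set G) m = ⋃ i ∈ Set.Iic m, (U : Set G) ^ i := by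
    ext g; simp [wordBall]
  rw [this]
  exact (Set.finite_Iic m).biUnion fun i _ => by
    classical
    rw [← Finset.coe_pow]
    exact Finset.finite_toSet _

lemma wb_grow {G Q : Type*} [Group G] [Group Q] [Finite Q] (φ : G →* Q)
    (hφ : Function.Surjective φ) (U : Set G) (hU : SemigroupGenerates U) (n : ℕ) :
    φ '' wordBall U n = Set.univ ∨ n + 1 ≤ (φ '' wordBall U n).ncard := by
  induction n with
  | zero =>
    right
    exact (Set.ncard_pos (Set.toFinite _)).2 ⟨φ 1, 1, wb_id 0, rfl⟩
  | succ n ih =>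
    have hsub : φ '' wordBall U n ⊆ φ '' wordBall U (n + 1) :=
      Set.image_mono fun a ha => wb_mono (by omega) ha
    rcases ih with h | h
    · left; rw [h] at hsub; exact Set.univ_subset_iff.1 hsub
    · by_cases heq : φ '' wordBall U n = φ '' wordBall U (n + 1)
      · left
        rw [← heq]
        have key : ∀ m : ℕ, ∀ g ∈ U ^ m, φ g ∈ φ '' wordBall U n := by
          intro m
          induction m with
          | zero =>
            intro g hg
            have : g = 1 := by simpa using hg
            exact ⟨1, wb_id n, by rw [this]⟩
          | succ m ih =>
            intro g hg
            rw [pow_succ] at hg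
            obtain ⟨a, ha, b, hb, rfl⟩ := Set.mem_mul.1 hg
            obtain ⟨c, hc, hca⟩ := ih a ha
            rw [heq]
            exact ⟨c * b, wb_mul hc (wb_one hb), by simp [hca]⟩
        apply Set.eq_univ_of_forall
        intro q
        obtain ⟨g, rfl⟩ := hφ q
        obtain ⟨m, hm⟩ := hU g
        exact key m g hm
      · right
        have := Set.ncard_lt_ncard (hsub.ssubset_of_ne heq) (Set.toFinite _)
        omega

/-- Let `G` be a group generated as a semigroup by a finite set `U`, and
let `H` be a normal subgroup of index `d` in `G`. Then there is a finite
`W ⊆ U^{≤ d²−d+1}` generating `H` as a group with `|W| ≥ |U|/d`. -/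
theorem statement12 {G : Type*} [Group G] (U : Finset G)
    (hU : SemigroupGenerates (U : Set G)) (H : Subgroup G) (hN : H.Normal)
    (d : ℕ) (hd : 0 < d) (hidx : H.index = d) :
    ∃ W : Finset G, (W : Set G) ⊆ wordBall (U : Set G) (d ^ 2 - d + 1) ∧
      Subgroup.closure (W : Set G) = H ∧ (U.card : ℝ) / d ≤ (W.card : ℝ) := by
  obtain ⟨k, rfl⟩ : ∃ k, d = k + 1 := ⟨d - 1, by omega⟩
  have hlen : (k + 1) ^ 2 - (k + 1) + 1 = k * k + k + 1 := by
    have : (k + 1) ^ 2 = (k * k + k) + (k + 1) := by ring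
    omega
  rw [hlen]
  have hcard : Nat.card (G ⧸ H) = k + 1 := hidx
  haveI : Finite (G ⧸ H) := Nat.finite_of_card_ne_zero (by omega)
  have hφ := QuotientGroup.mk'_surjective H
  have hker : ∀ g, QuotientGroup.mk' H g = 1 ↔ g ∈ H := fun g => by
    rw [← MonoidHom.mem_ker, QuotientGroup.ker_mk']
  generalize QuotientGroup.mk' H = φ at hφ hker
  have hpow : ∀ q : G ⧸ H, q ^ (k + 1) = 1 := fun q => by rw [← hcard]; exact pow_card_eq_one'
  have hall : φ '' wordBall (U : Set G) k = Set.univ := by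
    rcases wb_grow φ hφ U hU k with h | h
    · exact h
    · exact Set.eq_of_subset_of_ncard_le (Set.subset_univ _)
        (by rw [Set.ncard_univ]; omega) (Set.toFinite _)
  have hex : ∀ q : G ⧸ H, ∃ t ∈ wordBall (U : Set G) k, φ t = q ∧ (q = 1 → t = 1) := by
    intro q
    by_cases hq : q = 1
    · exact ⟨1, wb_id k, by simp [hq], fun _ => rfl⟩
    · obtain ⟨t, ht, h⟩ : q ∈ φ '' wordBall (U : Set G) k := by rw [hall]; trivial
      exact ⟨t, ht, h, fun h => absurd h hq⟩
  choose t ht htφ ht1 using hex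
  have hfin : (wordBall (U : Set G) (k * k + k + 1) ∩ (H : Set G)).Finite :=
    (wb_finite U _).inter_of_left _
  refine ⟨hfin.toFinset, by simp, ?_, ?_⟩
  · rw [hfin.coe_toFinset]
    apply le_antisymm
    · rw [Subgroup.closure_le]; exact Set.inter_subset_right
    · have key : ∀ m : ℕ, ∀ g ∈ (U : Set G) ^ m, g * (t (φ g))⁻¹ ∈
          Subgroup.closure (wordBall (U : Set G) (k * k + k + 1) ∩ (H : Set G)) := by
        intro m
        induction m with
        | zero =>
          intro g hg
          have : g = 1 := by simpa using hg
          rw [this, ht1 (φ 1) (map_one φ)]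
          simp [Subgroup.one_mem]
        | succ m ih =>
          intro g hg
          rw [pow_succ] at hg
          obtain ⟨a, ha, u, hu, rfl⟩ := Set.mem_mul.1 hg
          have h1 : t (φ a) * u * t (φ (a * u)) ^ k ∈
              Subgroup.closure (wordBall (U : Set G) (k * k + k + 1) ∩ (H : Set G)) := by
            apply Subgroup.subset_closure
            refine ⟨wb_mono (by omega)
              (wb_mul (wb_mul (ht (φ a)) (wb_one hu)) (wb_pow (ht (φ (a * u))) k)), ?_⟩
            apply (hker _).1
            rw [map_mul, map_mul, map_pow, htφ, htφ, ← map_mul, ← pow_succ', hpow]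
          have h2 : t (φ (a * u)) ^ (k + 1) ∈
              Subgroup.closure (wordBall (U : Set G) (k * k + k + 1) ∩ (H : Set G)) := by
            apply Subgroup.subset_closure
            refine ⟨wb_mono (by rw [Nat.mul_succ]; omega) (wb_pow (ht (φ (a * u))) (k + 1)), ?_⟩
            apply (hker _).1
            rw [map_pow, hpow]
          have h3 := Subgroup.mul_mem _ (ih a ha)
            (Subgroup.mul_mem _ h1 (Subgroup.inv_mem _ h2))
          convert h3 using 1
          rw [pow_succ']
          group
      intro g hg
      obtain ⟨m, hm⟩ := hU g
      have := key m g hm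
      rwa [ht1 (φ g) ((hker g).2 hg), inv_one, mul_one] at this
  · rw [div_le_iff₀ (by positivity)]
    have hle : U.card ≤ hfin.toFinset.card * (k + 1) := by
      classical
      haveI := Fintype.ofFinite (G ⧸ H)
      have : U.card ≤ (hfin.toFinset ×ˢ (Finset.univ : Finset (G ⧸ H))).card := by
        apply Finset.card_le_card_of_injOn (fun u => (u * t (φ u) ^ k, φ u))
        · intro u hu
          have h1 : u * t (φ u) ^ k ∈ wordBall (U : Set G) (k * k + k + 1) :=
            wb_mono (by omega) (wb_mul (wb_one hu) (wb_pow (ht (φ u)) k))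
          have h2 : u * t (φ u) ^ k ∈ H := by
            apply (hker _).1
            rw [map_mul, map_pow, htφ, ← pow_succ', hpow]
          simp [h1, h2]
        · intro u _ v _ h
          simp only [Prod.mk.injEq] at h
          obtain ⟨h, h'⟩ := h
          rw [h'] at h
          exact mul_right_cancel h
      rwa [Finset.card_product, Finset.card_univ, ← Nat.card_eq_fintype_card, hcard] at this
    exact_mod_cast hle
end

section
/- Let ρ: G → G' be a surjective group homomorphism with finite kernel. Suppose there exist α, β > 0 such that every finite set U generating G' as a semigroup satisfies |Uⁿ| ≥ (α|U|)^{βn} for all integers n ≥ 1. Then every finite set W generating G as a semigroup satisfies |Wⁿ| ≥ ((α/|ker ρ|)·|W|)^{βn} for all integers n ≥ 1. -/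
open Pointwise

/-- Let `ρ : G → G'` be a surjective homomorphism with finite kernel,
and suppose `α, β > 0` are such that every finite set `U` generating `G'` as a semigroup
satisfies `|Uⁿ| ≥ (α|U|)^{βn}` for all `n ≥ 1`. Then every finite set `W` generating `G`
as a semigroup satisfies `|Wⁿ| ≥ ((α/|ker ρ|)·|W|)^{βn}` for all `n ≥ 1`. -/
theorem statement15 {G G' : Type*} [Group G] [Group G'] (ρ : G →* G')
    (hsurj : Function.Surjective ρ) (hker : (ρ.ker : Set G).Finite)
    (α β : ℝ) (hα : 0 < α) (hβ : 0 < β)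
    (h : ∀ U : Finset G', SemigroupGenerates (U : Set G') →
      ∀ n : ℕ, 1 ≤ n →
        (α * (U.card : ℝ)) ^ (β * (n : ℝ)) ≤ (((U : Set G') ^ n).ncard : ℝ)) :
    ∀ W : Finset G, SemigroupGenerates (W : Set G) →
      ∀ n : ℕ, 1 ≤ n →
        ((α / (Nat.card ρ.ker : ℝ)) * (W.card : ℝ)) ^ (β * (n : ℝ))
          ≤ (((W : Set G) ^ n).ncard : ℝ) := by
  classical
  intro W hW n hn
  have himg : ∀ m : ℕ, ((W.image ρ : Finset G') : Set G') ^ m = ρ '' ((W : Set G) ^ m) := by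
    intro m
    rw [Finset.coe_image, Set.image_pow]
  have hU : SemigroupGenerates ((W.image ρ : Finset G') : Set G') := by
    intro g
    obtain ⟨x, rfl⟩ := hsurj g
    obtain ⟨m, hm⟩ := hW x
    exact ⟨m, by rw [himg]; exact Set.mem_image_of_mem _ hm⟩
  have hfin : ((W : Set G) ^ n).Finite := by
    rw [← Finset.coe_pow]; exact Finset.finite_toSet _
  have h1 := h _ hU n hn
  rw [himg] at h1
  have h2 : ((ρ '' ((W : Set G) ^ n)).ncard : ℝ) ≤ (((W : Set G) ^ n).ncard : ℝ) := by
    exact Nat.cast_le.mpr (Set.ncard_image_le hfin)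
  have hk : Nat.card ρ.ker = hker.toFinset.card := by
    rw [← Set.ncard_eq_toFinset_card _ hker]; rfl
  have hkpos : 0 < Nat.card ρ.ker := by
    rw [hk, Finset.card_pos]
    exact ⟨1, by simp⟩
  have hcard : W.card ≤ Nat.card ρ.ker * (W.image ρ).card := by
    apply Finset.card_le_mul_card_image
    intro b hb
    obtain ⟨a, ha, rfl⟩ := Finset.mem_image.mp hb
    rw [hk]
    apply Finset.card_le_card_of_injOn (fun x => a⁻¹ * x)
    · intro x hx
      have hx2 : ρ x = ρ a := by simpa using (Finset.mem_filter.mp hx).2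
      simp [MonoidHom.mem_ker, hx2]
    · intro x _ y _ hxy
      exact mul_left_cancel hxy
  have hkR : (0 : ℝ) < (Nat.card ρ.ker : ℝ) := by exact_mod_cast hkpos
  have hcR : (W.card : ℝ) ≤ (Nat.card ρ.ker : ℝ) * ((W.image ρ).card : ℝ) := by
    exact_mod_cast hcard
  refine le_trans (Real.rpow_le_rpow (by positivity) ?_ (by positivity)) (h1.trans h2)
  rw [div_mul_eq_mul_div, div_le_iff₀ hkR]
  nlinarith [mul_le_mul_of_nonneg_left hcR hα.le]
end
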